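/- arXiv:0711.1478 — 3 statements merged into one kernel-verified Lean document; each statement's English description precedes it below -/
import Mathlib

section
/- Fix a real number α with 0 < α < 1/2 and define, for integers i ≥ 1, n_i = ⌈(1 + i^{−α})^i⌉. Then: (a) the ratio n_i/n_{i+1} converges to 1 as i → ∞; and (b) the series ∑_{i≥2} 1/(ln n_i)² converges. -/
open Filter Topology in
/-- For `0 < α < 1/2` and `n_i = ⌈(1 + i^{−α})^i⌉` (for `i ≥ 1`):
(a) `n_i/n_{i+1} → 1`, and (b) `∑_{i ≥ 2} 1/(ln n_i)²` converges. -/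
theorem ratio_tendsto_one_and_summable
    (α : ℝ) (hα : 0 < α) (hα' : α < 1 / 2)
    (n : ℕ → ℕ) (hn : ∀ i : ℕ, 1 ≤ i → n i = ⌈(1 + (i : ℝ) ^ (-α)) ^ i⌉₊) :
    Filter.Tendsto (fun i : ℕ => (n i : ℝ) / (n (i + 1) : ℝ)) Filter.atTop (nhds 1) ∧
      Summable (fun i : ℕ => 1 / (Real.log (n (i + 2))) ^ 2) := by
  set x : ℕ → ℝ := fun i => (i : ℝ) ^ (-α) with hx
  set a : ℕ → ℝ := fun i => (1 + x i) ^ i with ha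
  have hx0 : ∀ i, 0 ≤ x i := fun i => Real.rpow_nonneg (Nat.cast_nonneg i) _
  have hxpos : ∀ i : ℕ, 1 ≤ i → 0 < x i := fun i hi =>
    Real.rpow_pos_of_pos (by exact_mod_cast hi) _
  have hx1 : ∀ i : ℕ, 1 ≤ i → x i ≤ 1 := fun i hi =>
    Real.rpow_le_one_of_one_le_of_nonpos (by exact_mod_cast hi) (by linarith)
  have hxlim : Tendsto x atTop (𝓝 0) :=
    (tendsto_rpow_neg_atTop hα).comp tendsto_natCast_atTop_atTop
  have hxmul : ∀ i : ℕ, 1 ≤ i → (i : ℝ) * x i = (i : ℝ) ^ (1 - α) := by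
    intro i hi
    have h0 : (0 : ℝ) < i := by exact_mod_cast hi
    rw [sub_eq_add_neg, Real.rpow_add h0, Real.rpow_one]
  have hna : ∀ i : ℕ, 1 ≤ i → (n i : ℝ) = (⌈a i⌉₊ : ℝ) := by
    intro i hi
    rw [hn i hi]
  have hapos : ∀ i, 0 < a i := fun i => pow_pos (by linarith [hx0 i]) _
  have hloga : ∀ i, Real.log (a i) = i * Real.log (1 + x i) := fun i => Real.log_pow _ _
  have halim : Tendsto a atTop atTop := by
    have h1 : Tendsto (fun i : ℕ => (i : ℝ) ^ (1 - α)) atTop atTop :=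
      (tendsto_rpow_atTop (by linarith)).comp tendsto_natCast_atTop_atTop
    refine tendsto_atTop_mono' _ ?_ h1
    filter_upwards [eventually_ge_atTop 1] with i hi
    rw [← hxmul i hi]
    have := one_add_mul_le_pow (by linarith [hx0 i] : (-2 : ℝ) ≤ x i) i
    simp only [ha]
    linarith
  constructor
  · have hceil : Tendsto (fun i => (⌈a i⌉₊ : ℝ) / a i) atTop (𝓝 1) :=
      (tendsto_nat_ceil_div_atTop (R := ℝ)).comp halim
    have hr : Tendsto (fun i => a i / a (i + 1)) atTop (𝓝 1) := by
      have hd : Tendsto (fun i => Real.log (a i) - Real.log (a (i + 1))) atTop (𝓝 0) := by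
        have hl : Tendsto (fun i => - x (i + 1)) atTop (𝓝 0) := by
          simpa using (hxlim.comp (tendsto_add_atTop_nat 1)).neg
        refine tendsto_of_tendsto_of_tendsto_of_le_of_le' hl hxlim ?_ ?_
        · filter_upwards [eventually_ge_atTop 1] with i hi
          have hle : x (i + 1) ≤ x i :=
            Real.rpow_le_rpow_of_nonpos (by exact_mod_cast hi) (by push_cast; linarith)
              (by linarith)
          have h1 : Real.log (1 + x (i + 1)) ≤ Real.log (1 + x i) :=
            Real.log_le_log (by linarith [hx0 (i + 1)]) (by linarith)
          have h2 : Real.log (1 + x (i + 1)) ≤ x (i + 1) := by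
            have := Real.log_le_sub_one_of_pos (by linarith [hx0 (i + 1)] : 0 < 1 + x (i + 1))
            linarith
          rw [hloga, hloga]
          push_cast
          nlinarith [mul_le_mul_of_nonneg_left h1 (Nat.cast_nonneg (α := ℝ) i)]
        · filter_upwards [eventually_ge_atTop 1] with i hi
          have hi0 : (0 : ℝ) < i := by exact_mod_cast hi
          have hle : x (i + 1) ≤ x i :=
            Real.rpow_le_rpow_of_nonpos hi0 (by push_cast; linarith) (by linarith)
          have hp : 0 < 1 + x (i + 1) := by linarith [hx0 (i + 1)]
          have hp' : 0 < 1 + x i := by linarith [hx0 i]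
          have h1 : Real.log (1 + x i) - Real.log (1 + x (i + 1)) ≤ x i - x (i + 1) := by
            rw [← Real.log_div hp'.ne' hp.ne']
            refine (Real.log_le_sub_one_of_pos (div_pos hp' hp)).trans ?_
            rw [div_sub_one hp.ne', div_le_iff₀ hp]
            nlinarith [hx0 (i + 1)]
          have h2 : (i : ℝ) * x i ≤ (i + 1) * x (i + 1) := by
            have e := hxmul (i + 1) (by omega)
            push_cast at e
            rw [hxmul i hi, e]
            exact Real.rpow_le_rpow hi0.le (by linarith) (by linarith)
          have h3 : 0 ≤ Real.log (1 + x (i + 1)) := Real.log_nonneg (by linarith [hx0 (i + 1)])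
          rw [hloga, hloga]
          push_cast
          nlinarith [mul_le_mul_of_nonneg_left h1 hi0.le]
      have := (Real.continuous_exp.tendsto 0).comp hd
      rw [Real.exp_zero] at this
      refine this.congr fun i => ?_
      simp only [Function.comp]
      rw [Real.exp_sub, Real.exp_log (hapos _), Real.exp_log (hapos _)]
    have hc1 := (hceil.comp (tendsto_add_atTop_nat 1)).inv₀ one_ne_zero
    have := (hceil.mul hr).mul hc1
    simp only [mul_one, inv_one] at this
    refine this.congr' ?_
    filter_upwards [eventually_ge_atTop 1] with i hi
    rw [hna i hi, hna (i + 1) (by omega)]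
    have h1 := (hapos i).ne'
    have h2 := (hapos (i + 1)).ne'
    have h3 : (⌈a (i + 1)⌉₊ : ℝ) ≠ 0 := by
      exact_mod_cast (Nat.ceil_pos.2 (hapos (i + 1))).ne'
    simp only [Function.comp]
    field_simp
  · have hs : Summable (fun i : ℕ => 4 * ((i + 2 : ℕ) : ℝ) ^ (2 * α - 2)) :=
      ((summable_nat_add_iff 2).2 (Real.summable_nat_rpow.2 (by linarith))).mul_left 4
    refine Summable.of_nonneg_of_le (fun i => by positivity) (fun i => ?_) hs
    generalize hj : i + 2 = j
    have hj1 : 1 ≤ j := by omega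
    have hj0 : (0 : ℝ) < j := by exact_mod_cast hj1
    have hp : 0 < 1 + x j := by linarith [hx0 j]
    have h1 : x j / 2 ≤ Real.log (1 + x j) := by
      refine le_trans ?_ (Real.one_sub_inv_le_log_of_pos hp)
      rw [← sub_nonneg]
      have : 1 - (1 + x j)⁻¹ - x j / 2 = x j * (1 - x j) / (2 * (1 + x j)) := by
        field_simp
        ring
      rw [this]
      have := hx1 j hj1
      exact div_nonneg (mul_nonneg (hx0 j) (by linarith)) (by linarith)
    have h2 : (j : ℝ) ^ (1 - α) / 2 ≤ Real.log (n j) := by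
      rw [hna j hj1, ← hxmul j hj1]
      refine le_trans ?_ (Real.log_le_log (hapos j) (Nat.le_ceil _))
      rw [hloga]
      nlinarith
    have hq : 0 < (j : ℝ) ^ (1 - α) := Real.rpow_pos_of_pos hj0 _
    have h3 : (4 : ℝ) * (j : ℝ) ^ (2 * α - 2) = 1 / ((j : ℝ) ^ (1 - α) / 2) ^ 2 := by
      have : (j : ℝ) ^ (2 * α - 2) = (((j : ℝ) ^ (1 - α)) ^ 2)⁻¹ := by
        rw [← Real.rpow_natCast, ← Real.rpow_mul hj0.le, ← Real.rpow_neg hj0.le]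
        congr 1
        push_cast
        ring
      rw [this]
      field_simp
      try norm_num
    rw [h3]
    gcongr
end

section
/- Let T : [0,1] → [0,1] be Lipschitz with constant L ≥ 1, and let μ be a T-invariant Borel probability measure on [0,1] which is absolutely continuous with respect to Lebesgue measure λ, with density f (so μ(A) = ∫_A f dλ). Suppose there are a nontrivial interval J ⊆ [0,1], a real δ > 0 and an integer n ≥ 1 such that f ≥ δ λ-almost everywhere on J and [0,1] ⊆ Tⁿ(J). Then μ(I) ≥ (δ/Lⁿ)·λ(I) for every interval I ⊆ [0,1], and consequently f ≥ δ/Lⁿ λ-almost everywhere on [0,1]. -/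
open MeasureTheory
open scoped ENNReal NNReal

/-- If `T : [0,1] → [0,1]` is Lipschitz with constant `L ≥ 1`, `μ = f·λ` is a `T`-invariant
Borel probability measure absolutely continuous w.r.t. Lebesgue measure with density `f`,
and there are a nontrivial interval `J ⊆ [0,1]`, `δ > 0` and `n ≥ 1` with `f ≥ δ` a.e. on `J`
and `[0,1] ⊆ Tⁿ(J)`, then `μ(I) ≥ (δ/Lⁿ)·λ(I)` for every interval `I ⊆ [0,1]`, and
`f ≥ δ/Lⁿ` λ-a.e. on `[0,1]`. -/
theorem density_lower_bound_of_expanding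
    (T : ℝ → ℝ) (hTmeas : Measurable T)
    (hmaps : Set.MapsTo T (Set.Icc 0 1) (Set.Icc 0 1))
    (L : ℝ≥0) (hL : 1 ≤ L) (hlip : LipschitzOnWith L T (Set.Icc 0 1))
    (f : ℝ → ℝ≥0∞) (hf : Measurable f)
    (μ : Measure ℝ) [IsProbabilityMeasure μ]
    (hμ : μ = (volume.restrict (Set.Icc 0 1)).withDensity f)
    (hinv : ∀ A : Set ℝ, MeasurableSet A → μ (T ⁻¹' A) = μ A)
    (J : Set ℝ) (a b : ℝ) (hab : a < b) (hJ : J = Set.Icc a b) (hJsub : J ⊆ Set.Icc 0 1)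
    (δ : ℝ) (hδ : 0 < δ) (n : ℕ) (hn : 1 ≤ n)
    (hfJ : ∀ᵐ x ∂volume.restrict J, ENNReal.ofReal δ ≤ f x)
    (himg : Set.Icc (0 : ℝ) 1 ⊆ T^[n] '' J) :
    (∀ c d : ℝ, Set.Icc c d ⊆ Set.Icc 0 1 →
        ENNReal.ofReal (δ / (L : ℝ) ^ n) * volume (Set.Icc c d) ≤ μ (Set.Icc c d)) ∧
      ∀ᵐ x ∂volume.restrict (Set.Icc (0 : ℝ) 1), ENNReal.ofReal (δ / (L : ℝ) ^ n) ≤ f x := by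
  have hinvn : ∀ k : ℕ, ∀ A : Set ℝ, MeasurableSet A → μ (T^[k] ⁻¹' A) = μ A := by
    intro k
    induction k with
    | zero => intro A _; simp
    | succ k ih =>
      intro A hA
      rw [Function.iterate_succ, Set.preimage_comp, hinv _ ((hTmeas.iterate k) hA), ih A hA]
  have hlipn : ∀ k : ℕ, LipschitzOnWith (L ^ k) (T^[k]) (Set.Icc 0 1) := by
    intro k
    induction k with
    | zero => simpa using LipschitzWith.id.lipschitzOnWith (s := Set.Icc (0:ℝ) 1)
    | succ k ih =>
      rw [Function.iterate_succ, pow_succ]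
      exact ih.comp hlip hmaps
  have hLpos : (0 : ℝ) < (L : ℝ) ^ n := by
    have : (0 : ℝ) < L := by exact_mod_cast lt_of_lt_of_le one_pos hL
    positivity
  have hJm : MeasurableSet J := hJ ▸ measurableSet_Icc
  have key : ∀ A : Set ℝ, MeasurableSet A → A ⊆ Set.Icc 0 1 →
      ENNReal.ofReal (δ / (L : ℝ) ^ n) * volume A ≤ μ A := by
    intro A hA hA1
    set B := J ∩ T^[n] ⁻¹' A with hB
    have hBm : MeasurableSet B := hJm.inter ((hTmeas.iterate n) hA)
    have hBJ : B ⊆ J := Set.inter_subset_left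
    have hAB : A ⊆ T^[n] '' B := by
      intro y hy
      obtain ⟨x, hx, rfl⟩ := himg (hA1 hy)
      exact ⟨x, ⟨hx, hy⟩, rfl⟩
    have hvol : volume A ≤ ENNReal.ofReal ((L : ℝ) ^ n) * volume B := by
      refine (measure_mono hAB).trans ?_
      have h := ((hlipn n).mono (hBJ.trans hJsub)).hausdorffMeasure_image_le (d := 1) zero_le_one
      rw [hausdorffMeasure_real] at h
      have e : ENNReal.ofReal ((L : ℝ) ^ n) = ((L ^ n : ℝ≥0) : ℝ≥0∞) := by
        rw [← NNReal.coe_pow, ENNReal.ofReal_coe_nnreal]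
      rw [e]
      simpa using h
    have hμB : ENNReal.ofReal δ * volume B ≤ μ B := by
      rw [hμ, withDensity_apply _ hBm, Measure.restrict_restrict hBm,
        Set.inter_eq_left.2 (hBJ.trans hJsub), ← setLIntegral_const]
      exact lintegral_mono_ae (ae_restrict_of_ae_restrict_of_subset hBJ hfJ)
    calc ENNReal.ofReal (δ / (L : ℝ) ^ n) * volume A
        ≤ ENNReal.ofReal (δ / (L : ℝ) ^ n) * (ENNReal.ofReal ((L : ℝ) ^ n) * volume B) := by
          gcongr
      _ = ENNReal.ofReal δ * volume B := by
          rw [← mul_assoc, ← ENNReal.ofReal_mul (by positivity), div_mul_cancel₀ _ hLpos.ne']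
      _ ≤ μ B := hμB
      _ ≤ μ (T^[n] ⁻¹' A) := measure_mono Set.inter_subset_right
      _ = μ A := hinvn n A hA
  refine ⟨fun c d h => key _ measurableSet_Icc h, ?_⟩
  refine ae_le_of_forall_setLIntegral_le_of_sigmaFinite measurable_const ?_
  intro s hs _
  have h := key (s ∩ Set.Icc 0 1) (hs.inter measurableSet_Icc) Set.inter_subset_right
  rw [setLIntegral_const, Measure.restrict_apply hs]
  refine h.trans ((measure_mono Set.inter_subset_left).trans ?_)
  rw [hμ, withDensity_apply _ hs]
end

section
/- (Borel's theorem on absolutely normal numbers, the measure-theoretic core of the paper's normal-number construction.) For Lebesgue-almost every x ∈ [0,1], x is absolutely normal: for every integer base b ≥ 2, every integer k ≥ 1 and every word w : {0,…,k−1} → {0,…,b−1}, the frequency (1/N)·#{ i < N : d_b(x, i+j) = w(j) for all j < k } converges to b^{−k} as N → ∞, where d_b(x,i) = ⌊b^{i+1} x⌋ mod b is the i-th digit of the b-ary expansion of x. -/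
open MeasureTheory
open scoped Classical

/-- Lebesgue measure on `[0,1)`. -/
noncomputable def muI : Measure ℝ := volume.restrict (Set.Ico (0 : ℝ) 1)

instance : IsProbabilityMeasure muI := ⟨by simp [muI]⟩

/-- multiplication by `q` modulo one -/
noncomputable def TT (q : ℕ) (x : ℝ) : ℝ := Int.fract ((q : ℝ) * x)

/-- cell of order `q` with index `p` -/
def EE (q p : ℕ) : Set ℝ := {y | ⌊(q : ℝ) * y⌋ = (p : ℤ)}

lemma measurable_TT (q : ℕ) : Measurable (TT q) := by
  unfold TT; fun_prop

lemma measurableSet_EE (q p : ℕ) : MeasurableSet (EE q p) := by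
  have h : Measurable (fun y : ℝ => ⌊(q : ℝ) * y⌋) := by fun_prop
  exact h (measurableSet_singleton (p : ℤ))

lemma TT_comp (a b : ℕ) (x : ℝ) : TT a (TT b x) = TT (a * b) x := by
  unfold TT
  rw [Int.fract_eq_fract]
  refine ⟨-(a * ⌊(b : ℝ) * x⌋), ?_⟩
  rw [Int.fract]
  push_cast
  ring

lemma mu_cell (q p : ℕ) (hq : 0 < q) (hp : p < q) (F : Set ℝ) (hF : MeasurableSet F) :
    muI (EE q p ∩ TT q ⁻¹' F) = ENNReal.ofReal ((q : ℝ)⁻¹) * muI F := by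
  have hq' : (0 : ℝ) < q := by exact_mod_cast hq
  have hpq : (p : ℝ) + 1 ≤ q := by exact_mod_cast hp
  unfold muI
  rw [Measure.restrict_apply ((measurableSet_EE q p).inter (measurable_TT q hF)),
    Measure.restrict_apply hF]
  have key : EE q p ∩ TT q ⁻¹' F ∩ Set.Ico 0 1
      = ((q : ℝ) * ·) ⁻¹' ((fun y => y + (-(p : ℝ))) ⁻¹' (F ∩ Set.Ico 0 1)) := by
    ext x
    simp only [EE, TT, Set.mem_inter_iff, Set.mem_preimage, Set.mem_setOf_eq, Set.mem_Ico]
    constructor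
    · rintro ⟨⟨h1, h2⟩, h3, h4⟩
      have : Int.fract ((q : ℝ) * x) = q * x + -(p : ℝ) := by
        rw [Int.fract, h1]; push_cast; ring
      rw [← this]
      exact ⟨h2, Int.fract_nonneg _, Int.fract_lt_one _⟩
    · rintro ⟨h2, h3, h4⟩
      have h1 : ⌊(q : ℝ) * x⌋ = (p : ℤ) := by
        rw [Int.floor_eq_iff]; push_cast; constructor <;> linarith
      have : Int.fract ((q : ℝ) * x) = q * x + -(p : ℝ) := by
        rw [Int.fract, h1]; push_cast; ring
      refine ⟨⟨h1, by rwa [this]⟩, ?_, ?_⟩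
      · have : (0 : ℝ) ≤ p := by positivity
        by_contra hx
        nlinarith
      · by_contra hx
        nlinarith
  rw [key, Real.volume_preimage_mul_left hq'.ne', measure_preimage_add_right,
    abs_of_pos (inv_pos.2 hq')]

lemma mu_EE (q p : ℕ) (hq : 0 < q) (hp : p < q) :
    muI (EE q p) = ENNReal.ofReal ((q : ℝ)⁻¹) := by
  have := mu_cell q p hq hp Set.univ MeasurableSet.univ
  simpa using this

lemma mu_TT (q : ℕ) (hq : 0 < q) (F : Set ℝ) (hF : MeasurableSet F) :
    muI (TT q ⁻¹' F) = muI F := by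
  have hq' : (0 : ℝ) < q := by exact_mod_cast hq
  have h1 : muI (TT q ⁻¹' F) = muI (⋃ p ∈ Finset.range q, (EE q p ∩ TT q ⁻¹' F)) := by
    unfold muI
    apply measure_congr
    rw [Filter.eventuallyEq_set]
    filter_upwards [ae_restrict_mem measurableSet_Ico] with x hx
    simp only [Set.mem_iUnion, Set.mem_inter_iff, Finset.mem_range, exists_prop]
    constructor
    · intro h
      have h0 : 0 ≤ ⌊(q : ℝ) * x⌋ := Int.floor_nonneg.2 (mul_nonneg hq'.le hx.1)
      have h2 : ⌊(q : ℝ) * x⌋ < (q : ℤ) := by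
        rw [Int.floor_lt]; push_cast; nlinarith [hx.2]
      refine ⟨⌊(q : ℝ) * x⌋.toNat, by omega, ?_, h⟩
      simp only [EE, Set.mem_setOf_eq]
      omega
    · rintro ⟨p, _, _, h⟩
      exact h
  rw [h1, measure_biUnion_finset]
  · rw [Finset.sum_congr rfl (fun p hp => mu_cell q p hq (Finset.mem_range.1 hp) F hF)]
    rw [Finset.sum_const, Finset.card_range, nsmul_eq_mul, ← mul_assoc,
      ENNReal.ofReal_inv_of_pos hq', ENNReal.ofReal_natCast,
      ENNReal.mul_inv_cancel (by exact_mod_cast hq.ne') (by simp), one_mul]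
  · intro p _ p' _ hne
    refine Set.disjoint_left.2 ?_
    rintro x ⟨h, _⟩ ⟨h', _⟩
    simp only [EE, Set.mem_setOf_eq] at h h'
    rw [h] at h'
    exact hne (by exact_mod_cast h')
  · intro p _
    exact (measurableSet_EE q p).inter (measurable_TT q hF)

lemma map_TT (q : ℕ) (hq : 0 < q) : Measure.map (TT q) muI = muI := by
  ext F hF
  rw [Measure.map_apply (measurable_TT q) hF, mu_TT q hq F hF]

/-- the event that the block starting at `n` has value `p` -/
def AA (b k p n : ℕ) : Set ℝ := TT (b ^ n) ⁻¹' EE (b ^ k) p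

lemma measurableSet_AA (b k p n : ℕ) : MeasurableSet (AA b k p n) :=
  measurable_TT _ (measurableSet_EE _ _)

lemma mu_AA (b k p n : ℕ) (hb : 0 < b) (hp : p < b ^ k) :
    muI (AA b k p n) = ENNReal.ofReal (((b ^ k : ℕ) : ℝ)⁻¹) := by
  rw [AA, mu_TT _ (by positivity) _ (measurableSet_EE _ _), mu_EE _ _ (by positivity) hp]

lemma mu_AA_inter (b k p m n : ℕ) (hb : 0 < b) (hp : p < b ^ k) (hmn : m + k ≤ n) :
    muI (AA b k p m ∩ AA b k p n) = muI (AA b k p m) * muI (AA b k p n) := by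
  obtain ⟨d, rfl⟩ := Nat.exists_eq_add_of_le hmn
  have h : AA b k p (m + k + d)
      = TT (b ^ m) ⁻¹' (TT (b ^ k) ⁻¹' (TT (b ^ d) ⁻¹' EE (b ^ k) p)) := by
    ext x
    simp only [AA, Set.mem_preimage, TT_comp]
    rw [show b ^ d * (b ^ k * b ^ m) = b ^ (m + k + d) by ring]
  have hd : MeasurableSet (TT (b ^ d) ⁻¹' EE (b ^ k) p) := measurable_TT _ (measurableSet_EE _ _)
  rw [mu_AA b k p m hb hp, mu_AA b k p _ hb hp, h, AA, ← Set.preimage_inter,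
    mu_TT _ (by positivity) _ ((measurableSet_EE _ _).inter (measurable_TT _ hd)),
    mu_cell _ _ (by positivity) hp _ hd, mu_TT _ (by positivity) _ (measurableSet_EE _ _),
    mu_EE _ _ (by positivity) hp]

lemma indep_ind (s t : Set ℝ) (hs : MeasurableSet s) (ht : MeasurableSet t)
    (h : muI (s ∩ t) = muI s * muI t) :
    ProbabilityTheory.IndepFun (s.indicator (fun _ => (1 : ℝ))) (t.indicator (fun _ => (1 : ℝ)))
      muI := by
  have h1 := (ProbabilityTheory.indepSet_iff_measure_inter_eq_mul hs ht muI).2 h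
  rw [ProbabilityTheory.IndepSet_iff_Indep] at h1
  rw [ProbabilityTheory.IndepFun_iff_Indep]
  refine ProbabilityTheory.indep_of_indep_of_le_left
    (ProbabilityTheory.indep_of_indep_of_le_right h1 ?_) ?_
  · exact Measurable.comap_le (Measurable.indicator (measurable_const)
      (MeasurableSpace.measurableSet_generateFrom rfl))
  · exact Measurable.comap_le (Measurable.indicator (measurable_const)
      (MeasurableSpace.measurableSet_generateFrom rfl))

lemma slln_res (b k p r : ℕ) (hb : 0 < b) (hk : 0 < k) (hp : p < b ^ k) :
    ∀ᵐ x ∂muI, Filter.Tendsto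
      (fun n : ℕ => (∑ i ∈ Finset.range n,
        (AA b k p (k * i + r)).indicator (fun _ => (1 : ℝ)) x) / n)
      Filter.atTop (nhds (((b : ℝ) ^ k)⁻¹)) := by
  have hmeas : ∀ n, Measurable ((AA b k p n).indicator (fun _ => (1 : ℝ))) := fun n =>
    measurable_const.indicator (measurableSet_AA b k p n)
  have hE : Measurable ((EE (b ^ k) p).indicator (fun _ => (1 : ℝ))) :=
    measurable_const.indicator (measurableSet_EE _ _)
  have hcomp : ∀ n, (AA b k p n).indicator (fun _ => (1 : ℝ))
      = (EE (b ^ k) p).indicator (fun _ => (1 : ℝ)) ∘ TT (b ^ n) := by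
    intro n; ext x; simp [AA, Set.indicator]
  have hmap : ∀ n, Measure.map ((AA b k p n).indicator (fun _ => (1 : ℝ))) muI
      = Measure.map ((EE (b ^ k) p).indicator (fun _ => (1 : ℝ))) muI := by
    intro n
    rw [hcomp, ← Measure.map_map hE (measurable_TT _), map_TT _ (by positivity)]
  have := ProbabilityTheory.strong_law_ae_real (μ := muI)
    (fun i => (AA b k p (k * i + r)).indicator (fun _ => (1 : ℝ)))
    ((integrable_const (1 : ℝ)).indicator (measurableSet_AA _ _ _ _)) ?_ ?_
  · have hint : ∫ x, (AA b k p (k * 0 + r)).indicator (fun _ => (1 : ℝ)) x ∂muI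
        = ((b : ℝ) ^ k)⁻¹ := by
      rw [integral_indicator_const _ (measurableSet_AA _ _ _ _), measureReal_def,
        mu_AA b k p _ hb hp, ENNReal.toReal_ofReal (by positivity)]
      simp
    rw [hint] at this
    exact this
  · intro i j hij
    have main : ∀ i j, i < j → ProbabilityTheory.IndepFun
        ((AA b k p (k * i + r)).indicator (fun _ => (1 : ℝ)))
        ((AA b k p (k * j + r)).indicator (fun _ => (1 : ℝ))) muI := by
      intro i j hij
      refine indep_ind _ _ (measurableSet_AA _ _ _ _) (measurableSet_AA _ _ _ _)
        (mu_AA_inter b k p _ _ hb hp ?_)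
      nlinarith
    rcases lt_or_gt_of_ne hij with h | h
    · exact main i j h
    · exact (main j i h).symm
  · intro i
    exact ⟨(hmeas _).aemeasurable, (hmeas _).aemeasurable, by rw [hmap, hmap]⟩

lemma sum_blocks (a : ℕ → ℝ) (k n : ℕ) :
    ∑ i ∈ Finset.range (k * n), a i
      = ∑ r ∈ Finset.range k, ∑ i ∈ Finset.range n, a (k * i + r) := by
  induction n with
  | zero => simp
  | succ n ih =>
    rw [Nat.mul_succ, Finset.sum_range_add, ih, ← Finset.sum_add_distrib]
    refine Finset.sum_congr rfl fun r _ => ?_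
    rw [Finset.sum_range_succ]

lemma combine (a : ℕ → ℝ) (c : ℝ) (k : ℕ) (hk : 0 < k) (h0 : ∀ i, 0 ≤ a i) (h1 : ∀ i, a i ≤ 1)
    (h : ∀ r < k, Filter.Tendsto
      (fun n : ℕ => (∑ i ∈ Finset.range n, a (k * i + r)) / n) Filter.atTop (nhds c)) :
    Filter.Tendsto (fun n : ℕ => (∑ i ∈ Finset.range n, a i) / n) Filter.atTop (nhds c) := by
  have hk' : (0 : ℝ) < k := by exact_mod_cast hk
  have hA : Filter.Tendsto (fun n : ℕ => (∑ i ∈ Finset.range (k * n), a i) / (n : ℝ))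
      Filter.atTop (nhds (k * c)) := by
    have := tendsto_finsetSum (Finset.range k) (fun r hr => h r (Finset.mem_range.1 hr))
    simp only [Finset.sum_const, Finset.card_range, nsmul_eq_mul] at this
    refine this.congr fun n => ?_
    rw [sum_blocks, Finset.sum_div]
  have hdiv : Filter.Tendsto (fun n : ℕ => n / k) Filter.atTop Filter.atTop :=
    Nat.tendsto_div_const_atTop hk.ne'
  have hB := hA.comp hdiv
  have hC : Filter.Tendsto (fun n : ℕ => ((n / k : ℕ) : ℝ) / n) Filter.atTop
      (nhds ((k : ℝ)⁻¹)) := by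
    have := (tendsto_nat_floor_mul_div_atTop (R := ℝ) (a := (k : ℝ)⁻¹) (by positivity)).comp
      tendsto_natCast_atTop_atTop
    refine this.congr fun n => ?_
    simp only [Function.comp]
    rw [show (k : ℝ)⁻¹ * n = (n : ℝ) / k by field_simp, Nat.floor_div_eq_div]
  have hD : Filter.Tendsto
      (fun n : ℕ => (∑ i ∈ Finset.range (n % k), a (k * (n / k) + i)) / (n : ℝ))
      Filter.atTop (nhds 0) := by
    refine squeeze_zero (fun n => div_nonneg (Finset.sum_nonneg fun i _ => h0 _) (by positivity))
      (fun n => ?_) (tendsto_const_div_atTop_nhds_zero_nat (k : ℝ))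
    gcongr
    calc _ ≤ ∑ i ∈ Finset.range (n % k), (1 : ℝ) := Finset.sum_le_sum fun i _ => h1 _
      _ = ((n % k : ℕ) : ℝ) := by simp
      _ ≤ k := by exact_mod_cast (Nat.mod_lt n hk).le
  have hE := (hB.mul hC).add hD
  rw [show (k : ℝ) * c * (k : ℝ)⁻¹ + 0 = c by field_simp; ring] at hE
  refine hE.congr' ?_
  filter_upwards [Filter.eventually_ge_atTop k] with n hn
  have hq : (((n / k : ℕ) : ℝ)) ≠ 0 := by
    have : 0 < n / k := Nat.div_pos hn hk
    positivity
  have hs : ∑ i ∈ Finset.range n, a i = ∑ i ∈ Finset.range (k * (n / k)), a i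
      + ∑ i ∈ Finset.range (n % k), a (k * (n / k) + i) := by
    rw [← Finset.sum_range_add, Nat.div_add_mod]
  rw [hs, add_div]
  congr 1
  simp only [Function.comp]
  field_simp

lemma word_block (b : ℕ) (hb : 0 < b) (w : ℕ → ℕ) (k : ℕ) (hw : ∀ j < k, w j < b) :
    ∃ p < b ^ k, ∀ y : ℝ, 0 ≤ y → y < 1 →
      ((∀ j < k, (⌊(b : ℝ) ^ (j + 1) * y⌋ % (b : ℤ)) = (w j : ℤ)) ↔ y ∈ EE (b ^ k) p) := by
  induction k with
  | zero =>
    refine ⟨0, by simp, fun y h0 h1 => ?_⟩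
    simp only [EE, Set.mem_setOf_eq, Int.floor_eq_iff]
    simp [h0, h1]
  | succ k ih =>
    obtain ⟨p, hp, H⟩ := ih fun j hj => hw j (by omega)
    have hwk := hw k (by omega)
    have hbR : (b : ℝ) ≠ 0 := by exact_mod_cast hb.ne'
    refine ⟨b * p + w k, ?_, fun y h0 h1 => ?_⟩
    · rw [pow_succ]; nlinarith
    · have hsplit : (∀ j < k + 1, (⌊(b : ℝ) ^ (j + 1) * y⌋ % (b : ℤ)) = (w j : ℤ)) ↔
          (∀ j < k, (⌊(b : ℝ) ^ (j + 1) * y⌋ % (b : ℤ)) = (w j : ℤ)) ∧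
            (⌊(b : ℝ) ^ (k + 1) * y⌋ % (b : ℤ)) = (w k : ℤ) := by
        constructor
        · intro h; exact ⟨fun j hj => h j (by omega), h k (by omega)⟩
        · rintro ⟨h, h'⟩ j hj
          rcases Nat.lt_succ_iff_lt_or_eq.1 hj with hj | rfl
          · exact h j hj
          · exact h'
      have hfl : ⌊(b : ℝ) ^ k * y⌋ = ⌊(b : ℝ) ^ (k + 1) * y⌋ / (b : ℤ) := by
        rw [← Int.floor_div_natCast]
        congr 1
        field_simp
        try ring
      rw [hsplit, H y h0 h1]
      simp only [EE, Set.mem_setOf_eq]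
      push_cast
      rw [hfl]
      have hbz : (0 : ℤ) < b := by exact_mod_cast hb
      have hwz : (w k : ℤ) < b := by exact_mod_cast hwk
      generalize ⌊(b : ℝ) ^ (k + 1) * y⌋ = z
      constructor
      · rintro ⟨e1, e2⟩
        rw [← e1, ← e2]
        exact (Int.mul_ediv_add_emod z b).symm
      · rintro rfl
        constructor
        · rw [Int.mul_add_ediv_left _ _ hbz.ne', Int.ediv_eq_zero_of_lt (by positivity) hwz,
            add_zero]
        · rw [Int.mul_add_emod_self_left, Int.emod_eq_of_lt (by positivity) hwz]

lemma digit_shift (b i j : ℕ) (x : ℝ) :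
    ⌊(b : ℝ) ^ (i + j + 1) * x⌋ % (b : ℤ) = ⌊(b : ℝ) ^ (j + 1) * TT (b ^ i) x⌋ % (b : ℤ) := by
  have : (b : ℝ) ^ (i + j + 1) * x
      = (b : ℝ) ^ (j + 1) * TT (b ^ i) x
        + (((b : ℤ) * ((b : ℤ) ^ j * ⌊((b ^ i : ℕ) : ℝ) * x⌋) : ℤ) : ℝ) := by
    rw [TT, Int.fract]; push_cast; ring
  rw [this, Int.floor_add_intCast, Int.add_mul_emod_self_left]

/-- Borel's theorem: Lebesgue-almost every `x ∈ [0,1]` is absolutely normal, i.e. for every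
base `b ≥ 2`, every length `k ≥ 1` and every word `w` on the alphabet `{0,…,b−1}`, the
frequency of occurrences of `w` among the first `N` digit positions of the `b`-ary expansion
of `x` converges to `b^{−k}`. Here the `i`-th digit is `⌊b^{i+1}x⌋ mod b`. -/
theorem ae_absolutely_normal :
    ∀ᵐ x ∂volume.restrict (Set.Icc (0 : ℝ) 1),
      ∀ b : ℕ, 2 ≤ b → ∀ k : ℕ, 1 ≤ k → ∀ w : ℕ → ℕ, (∀ j < k, w j < b) →
        Filter.Tendsto
          (fun N : ℕ =>
            (((Finset.range N).filter
                (fun i => ∀ j < k, (⌊(b : ℝ) ^ (i + j + 1) * x⌋ % (b : ℤ)) = (w j : ℤ))).card : ℝ)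
              / N)
          Filter.atTop (nhds (((b : ℝ) ^ k)⁻¹)) := by
  rw [← Measure.restrict_congr_set (Ico_ae_eq_Icc (μ := volume) (a := (0 : ℝ)) (b := 1))]
  change ∀ᵐ x ∂muI, _
  have key : ∀ᵐ x ∂muI, ∀ b k p r : ℕ, 0 < b → 0 < k → p < b ^ k → Filter.Tendsto
      (fun n : ℕ => (∑ i ∈ Finset.range n,
        (AA b k p (k * i + r)).indicator (fun _ => (1 : ℝ)) x) / n)
      Filter.atTop (nhds (((b : ℝ) ^ k)⁻¹)) := by
    simp only [ae_all_iff]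
    intro b k p r hb hk hp
    exact slln_res b k p r hb hk hp
  filter_upwards [key] with x hx b hb k hk w hw
  obtain ⟨p, hp, H⟩ := word_block b (by omega) w k hw
  have := combine (fun n => (AA b k p n).indicator (fun _ => (1 : ℝ)) x) _ k hk
    (fun i => Set.indicator_nonneg (fun _ _ => zero_le_one) _)
    (fun i => Set.indicator_le_self' (fun _ _ => zero_le_one) _)
    (fun r _ => hx b k p r (by omega) hk hp)
  refine this.congr fun N => ?_
  congr 1
  rw [Finset.card_filter]
  push_cast
  refine Finset.sum_congr rfl fun i _ => ?_
  simp only [digit_shift]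
  rw [Set.indicator_apply]
  refine if_congr ?_ rfl rfl
  exact (H (TT (b ^ i) x) (Int.fract_nonneg _) (Int.fract_lt_one _)).symm
end
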